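/- Let g ∈ C^{3k−1}(ℝ) with g(0) = g'(0) = 0, and define for u ∈ X^k(Q_T) the quantity ρ(u) = Σ_{m=0}^{k−1} ‖∂_t^m u|_{t=0}‖_{H^{3(k−m)}(I)}. Then there exists a nondecreasing function λ(ρ) such that whenever ρ(u), ρ(v) ≤ ρ, one has ‖∂_t^m (g(u) − g(v))_x|_{t=0}‖_{H^{3(k−m−1)}(I)} ≤ λ(ρ)·ρ(u − v) for every 0 ≤ m ≤ k−1. -/

import Mathlib

open MeasureTheory Set

/-- L² norm of a real function on the interval (a,b). -/
noncomputable def L2norm (f : ℝ → ℝ) (a b : ℝ) : ℝ :=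
  (∫ x in a..b, (f x) ^ 2) ^ ((1 : ℝ) / 2)

/-- H^s norm (sum of L² norms of derivatives up to order s) on (a,b). -/
noncomputable def Hnorm (s : ℕ) (f : ℝ → ℝ) (a b : ℝ) : ℝ :=
  ∑ j ∈ Finset.range (s + 1), L2norm (iteratedDeriv j f) a b

/-- `ρ(u) = Σ_{m=0}^{k−1} ‖∂_t^m u|_{t=0}‖_{H^{3(k−m)}(I)}`. -/
noncomputable def rhoQ (k : ℕ) (u : ℝ → ℝ → ℝ) (R : ℝ) : ℝ :=
  ∑ m ∈ Finset.range k,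
    Hnorm (3 * (k - m)) (fun x => iteratedDeriv m (fun t => u t x) 0) 0 R

/-!
By the chain rule, differentiating a function `P` of the `n`-jet of `f` gives a function of the
`(n + 1)`-jet with one derivative less than `P`. Iterating this, as in the Faà di Bruno formula,
first in `t` and then in `x`, shows that the mixed jet of `g ∘ u` at `t = 0` is a fixed function of
the mixed jet of `u`. At orders `m` in `t` and `3 (k - m - 1) + 1` in `x`, this function is `C¹` for
`g ∈ C^{3k-1}`, hence Lipschitz on balls. The entries `∂_x^b ∂_t^a u` involved satisfy
`b + 1 ≤ 3 (k - a)`, so the embedding `H¹ ⊂ L^∞` in `x` bounds them by `ρ(u)`.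
-/

section Jet

variable {𝕜 : Type*} [NontriviallyNormedField 𝕜]
  {E : Type*} [NormedAddCommGroup E] [NormedSpace 𝕜 E]
  {F : Type*} [NormedAddCommGroup F] [NormedSpace 𝕜 F]

/-- The `n`-jet `(f x, f' x, …, f⁽ⁿ⁾ x)` of a function of one variable, a point of a product space
so that functions of the jet are functions between normed spaces. -/
noncomputable def jet (n : ℕ) (f : 𝕜 → E) (x : 𝕜) : Fin (n + 1) → E :=
  fun i => iteratedDeriv i f x

lemma init_jet (n : ℕ) (f : 𝕜 → E) (x : 𝕜) : Fin.init (jet (n + 1) f x) = jet n f x :=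
  rfl

lemma hasDerivAt_jet {n : ℕ} {f : 𝕜 → E} (hf : ContDiff 𝕜 (n + 1) f) (x : 𝕜) :
    HasDerivAt (jet n f) (Fin.tail (jet (n + 1) f x)) x := by
  refine hasDerivAt_pi.2 fun i => ?_
  have hdiff : Differentiable 𝕜 (iteratedDeriv i f) :=
    hf.differentiable_iteratedDeriv i (by exact_mod_cast i.is_lt)
  simpa only [Fin.tail, jet, Fin.val_succ, iteratedDeriv_succ] using (hdiff x).hasDerivAt

lemma jet_succ {n : ℕ} {f : 𝕜 → E} (hf : ContDiff 𝕜 (n + 1) f) (x : 𝕜) :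
    jet (n + 1) f x = Fin.cons (f x) (deriv (jet n f) x) := by
  rw [(hasDerivAt_jet hf x).deriv, ← Fin.cons_self_tail (jet (n + 1) f x)]
  simp only [jet, Fin.val_zero, iteratedDeriv_zero, Fin.tail_cons]

lemma jet_sub {n : ℕ} {f g : 𝕜 → E} (hf : ContDiff 𝕜 n f) (hg : ContDiff 𝕜 n g) (x : 𝕜) :
    jet n (fun y => f y - g y) x = jet n f x - jet n g x := by
  funext i
  have hi : ((i : ℕ) : WithTop ℕ∞) ≤ n := by exact_mod_cast i.is_le
  exact iteratedDeriv_sub (hf.of_le hi).contDiffAt (hg.of_le hi).contDiffAt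

theorem exists_contDiff_jet_comp (n : ℕ) {r : WithTop ℕ∞} {G : E → F}
    (hG : ContDiff 𝕜 (r + n) G) :
    ∃ P : (Fin (n + 1) → E) → Fin (n + 1) → F, ContDiff 𝕜 r P ∧
      ∀ f : 𝕜 → E, ContDiff 𝕜 n f → ∀ x, jet n (fun y => G (f y)) x = P (jet n f x) := by
  induction n generalizing r with
  | zero =>
    refine ⟨fun z _ => G (z 0), ?_, fun f _ x => ?_⟩
    · have hG' : ContDiff 𝕜 r G := by simpa using hG
      fun_prop
    · funext i
      simp [jet, Fin.fin_one_eq_zero i]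
  | succ n ih =>
    have hG' : ContDiff 𝕜 ((r + 1) + n) G := by
      rwa [add_assoc, add_comm 1, ← Nat.cast_one, ← Nat.cast_add]
    obtain ⟨P, hP, hPjet⟩ := ih hG'
    refine ⟨fun z => Fin.cons (G (z 0)) (fderiv 𝕜 P (Fin.init z) (Fin.tail z)), ?_,
      fun f hf x => ?_⟩
    · have hG₀ : ContDiff 𝕜 r G := hG.of_le le_self_add
      have hP' : ContDiff 𝕜 r (fderiv 𝕜 P) := hP.fderiv_right le_rfl
      have hinit : ContDiff 𝕜 r (Fin.init : (Fin (n + 2) → E) → Fin (n + 1) → E) :=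
        contDiff_pi.2 fun i => contDiff_apply 𝕜 E i.castSucc
      have htail : ContDiff 𝕜 r (Fin.tail : (Fin (n + 2) → E) → Fin (n + 1) → E) :=
        contDiff_pi.2 fun i => contDiff_apply 𝕜 E i.succ
      have hderiv := (hP'.comp hinit).clm_apply htail
      refine contDiff_pi.2 (Fin.cases ?_ fun i => ?_)
      · exact hG₀.comp (contDiff_apply 𝕜 E 0)
      · exact contDiff_pi.1 hderiv i
    · have hf' : ContDiff 𝕜 (n + 1) f := by exact_mod_cast hf
      have hGf : ContDiff 𝕜 (n + 1) fun y => G (f y) :=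
        (hG.of_le (by push_cast; exact le_add_self)).comp hf'
      have hchain : HasDerivAt (jet n fun y => G (f y))
          (fderiv 𝕜 P (jet n f x) (Fin.tail (jet (n + 1) f x))) x := by
        rw [funext (hPjet f (hf'.of_le le_self_add))]
        exact ((hP.differentiable (by simp)) _).hasFDerivAt.comp_hasDerivAt x
          (hasDerivAt_jet hf' x)
      rw [jet_succ hGf, hchain.deriv]
      simp [init_jet, jet]

lemma iteratedDeriv_apply {ι : Type*} [Fintype ι] {n : ℕ} {f : 𝕜 → ι → E}
    (hf : ContDiff 𝕜 n f) (x : 𝕜) (i : ι) :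
    iteratedDeriv n f x i = iteratedDeriv n (fun y => f y i) x := by
  induction n generalizing f with
  | zero => simp only [iteratedDeriv_zero]
  | succ n ih =>
    have hderiv (y : 𝕜) : deriv f y i = deriv (fun z => f z i) y := by
      have hdiff := hf.differentiable (by simp) y
      rw [deriv_pi (differentiableAt_pi.1 hdiff)]
    have hf' : ContDiff 𝕜 n (deriv f) := ContDiff.deriv' (by exact_mod_cast hf)
    simp only [iteratedDeriv_succ', ih hf', hderiv]

lemma contDiff_deriv_fst {n : WithTop ℕ∞} {f : 𝕜 → E → F}
    (hf : ContDiff 𝕜 (n + 1) (Function.uncurry f)) :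
    ContDiff 𝕜 n (Function.uncurry fun t y => deriv (fun s => f s y) t) := by
  have hswap : ContDiff 𝕜 (n + 1) (Function.uncurry fun (p : 𝕜 × E) s => f s p.2) :=
    hf.comp (contDiff_snd.prodMk (contDiff_snd.comp contDiff_fst))
  exact (hswap.fderiv_succ contDiff_fst).clm_apply contDiff_const

lemma contDiff_iteratedDeriv_fst (m : ℕ) {n : WithTop ℕ∞} {f : 𝕜 → E → F}
    (hf : ContDiff 𝕜 (n + m) (Function.uncurry f)) (t : 𝕜) :
    ContDiff 𝕜 n fun y => iteratedDeriv m (fun s => f s y) t := by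
  induction m generalizing f with
  | zero =>
    have hf₀ : ContDiff 𝕜 n (Function.uncurry f) := by simpa using hf
    simp only [iteratedDeriv_zero]
    exact hf₀.comp (contDiff_prodMk_right t)
  | succ m ih =>
    simp only [iteratedDeriv_succ']
    refine ih (f := fun s y => deriv (fun s' => f s' y) s) (contDiff_deriv_fst ?_)
    simpa only [Nat.cast_add, Nat.cast_one, add_assoc] using hf

lemma contDiff_jet_fst (m : ℕ) {n : WithTop ℕ∞} {f : 𝕜 → E → F}
    (hf : ContDiff 𝕜 (n + m) (Function.uncurry f)) (t : 𝕜) :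
    ContDiff 𝕜 n fun y => jet m (fun s => f s y) t :=
  contDiff_pi.2 fun i => contDiff_iteratedDeriv_fst i (hf.of_le (by gcongr; exact i.is_le)) t

end Jet

section TraceJet

/-- The jet of order `j` in `x` of the jet of order `m` in `t` at `t = 0`; its `(b, a)` entry is
`∂_x^b (∂_t^a u|_{t=0})`. -/
noncomputable def traceJet (m j : ℕ) (u : ℝ → ℝ → ℝ) (x : ℝ) : Fin (j + 1) → Fin (m + 1) → ℝ :=
  jet j (fun y => jet m (fun t => u t y) 0) x

variable {m j : ℕ} {u v : ℝ → ℝ → ℝ}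

lemma traceJet_apply (hu : ContDiff ℝ (j + m) (Function.uncurry u)) (x : ℝ)
    (b : Fin (j + 1)) (a : Fin (m + 1)) :
    traceJet m j u x b a = iteratedDeriv b (fun y => iteratedDeriv a (fun t => u t y) 0) x :=
  iteratedDeriv_apply (contDiff_jet_fst m (hu.of_le (by gcongr; exact b.is_le)) 0) x a

lemma traceJet_sub (hu : ContDiff ℝ (j + m) (Function.uncurry u))
    (hv : ContDiff ℝ (j + m) (Function.uncurry v)) (x : ℝ) :
    traceJet m j (fun t y => u t y - v t y) x = traceJet m j u x - traceJet m j v x := by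
  have hslice {w : ℝ → ℝ → ℝ} (hw : ContDiff ℝ (j + m) (Function.uncurry w)) (y : ℝ) :
      ContDiff ℝ m fun t => w t y :=
    (hw.of_le le_add_self).comp (contDiff_prodMk_left y)
  simp only [traceJet, jet_sub (hslice hu _) (hslice hv _)]
  exact jet_sub (contDiff_jet_fst m hu 0) (contDiff_jet_fst m hv 0) x

lemma exists_contDiff_traceJet_comp (m j : ℕ) {r : WithTop ℕ∞} {g : ℝ → ℝ}
    (hg : ContDiff ℝ (r + j + m) g) :
    ∃ P : (Fin (j + 1) → Fin (m + 1) → ℝ) → Fin (j + 1) → Fin (m + 1) → ℝ, ContDiff ℝ r P ∧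
      ∀ u : ℝ → ℝ → ℝ, ContDiff ℝ (j + m) (Function.uncurry u) →
        ∀ x, traceJet m j (fun t y => g (u t y)) x = P (traceJet m j u x) := by
  obtain ⟨Pt, hPt, hPt_jet⟩ := exists_contDiff_jet_comp m hg
  obtain ⟨Px, hPx, hPx_jet⟩ := exists_contDiff_jet_comp j hPt
  refine ⟨Px, hPx, fun u hu x => ?_⟩
  have hslice (y : ℝ) : ContDiff ℝ m fun t => u t y :=
    (hu.of_le le_add_self).comp (contDiff_prodMk_left y)
  simp only [traceJet, hPt_jet _ (hslice _)]
  exact hPx_jet _ (contDiff_jet_fst m hu 0) x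

lemma exists_lipschitz_traceJet_comp (m j : ℕ) {g : ℝ → ℝ} (hg : ContDiff ℝ (1 + j + m) g)
    (M : ℝ) :
    ∃ K : NNReal, ∀ u v : ℝ → ℝ → ℝ, ContDiff ℝ (j + m) (Function.uncurry u) →
      ContDiff ℝ (j + m) (Function.uncurry v) →
      ∀ x, ‖traceJet m j u x‖ ≤ M → ‖traceJet m j v x‖ ≤ M →
        ‖traceJet m j (fun t y => g (u t y) - g (v t y)) x‖ ≤
          K * ‖traceJet m j (fun t y => u t y - v t y) x‖ := by
  obtain ⟨P, hP, hP_jet⟩ := exists_contDiff_traceJet_comp m j hg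
  obtain ⟨K, hK⟩ := hP.contDiffOn.exists_lipschitzOnWith one_ne_zero
    (convex_closedBall 0 M) (isCompact_closedBall 0 M)
  refine ⟨K, fun u v hu hv x hux hvx => ?_⟩
  have hg' : ContDiff ℝ (j + m) g := hg.of_le (by rw [add_assoc]; exact le_add_self)
  rw [traceJet_sub (hg'.comp hu) (hg'.comp hv), traceJet_sub hu hv, hP_jet u hu, hP_jet v hv]
  exact hK.norm_sub_le (mem_closedBall_zero_iff.2 hux) (mem_closedBall_zero_iff.2 hvx)

end TraceJet

section SobolevNorms

variable {a b : ℝ} {f : ℝ → ℝ}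

lemma L2norm_nonneg (f : ℝ → ℝ) (hab : a ≤ b) : 0 ≤ L2norm f a b :=
  Real.rpow_nonneg (intervalIntegral.integral_nonneg hab fun _ _ => sq_nonneg _) _

lemma L2norm_sq (f : ℝ → ℝ) (hab : a ≤ b) : L2norm f a b ^ 2 = ∫ x in a..b, f x ^ 2 := by
  rw [L2norm, ← Real.sqrt_eq_rpow, Real.sq_sqrt]
  exact intervalIntegral.integral_nonneg hab fun _ _ => sq_nonneg _

lemma L2norm_le_of_abs_le {B : ℝ} (hab : a ≤ b) (hB : 0 ≤ B) (hf : ∀ x ∈ Icc a b, |f x| ≤ B) :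
    L2norm f a b ≤ √(b - a) * B := by
  refine (abs_le_of_sq_le_sq' ?_ (by positivity)).2
  rw [L2norm_sq f hab, mul_pow, Real.sq_sqrt (sub_nonneg.2 hab), mul_comm]
  have hbound (x : ℝ) (hx : x ∈ uIoc a b) : ‖f x ^ 2‖ ≤ B ^ 2 := by
    rw [uIoc_of_le hab] at hx
    simpa only [norm_pow] using pow_le_pow_left₀ (norm_nonneg _) (hf x (Ioc_subset_Icc_self hx)) 2
  have hint := intervalIntegral.norm_integral_le_of_norm_le_const hbound
  rw [abs_of_nonneg (sub_nonneg.2 hab)] at hint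
  exact (le_abs_self _).trans hint

lemma sq_sub_sq_le_L2norm_sq_add (hf : ContDiff ℝ 1 f) {x y : ℝ} (hx : x ∈ Icc a b)
    (hy : y ∈ Icc a b) :
    f x ^ 2 - f y ^ 2 ≤ L2norm f a b ^ 2 + L2norm (deriv f) a b ^ 2 := by
  have hab : a ≤ b := hx.1.trans hx.2
  have hf₀ : Continuous f := hf.continuous
  have hf₁ : Continuous (deriv f) := hf.continuous_deriv_one
  have hsq : Continuous fun z => f z ^ 2 + deriv f z ^ 2 := by fun_prop
  have hderiv (z : ℝ) : HasDerivAt (fun w => f w ^ 2) (2 * f z * deriv f z) z := by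
    simpa using (hf.differentiable one_ne_zero z).hasDerivAt.fun_pow 2
  have hYoung (z : ℝ) : ‖2 * f z * deriv f z‖ ≤ f z ^ 2 + deriv f z ^ 2 := by
    rw [Real.norm_eq_abs, abs_le]
    exact ⟨neg_le_of_neg_le (by linarith [two_mul_le_add_sq (-f z) (deriv f z)]),
      two_mul_le_add_sq _ _⟩
  have hadd : ∫ z in a..b, (f z ^ 2 + deriv f z ^ 2) =
      (∫ z in a..b, f z ^ 2) + ∫ z in a..b, deriv f z ^ 2 :=
    intervalIntegral.integral_add ((hf₀.pow 2).intervalIntegrable _ _)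
      ((hf₁.pow 2).intervalIntegrable _ _)
  calc f x ^ 2 - f y ^ 2
      = ∫ z in y..x, 2 * f z * deriv f z :=
        (intervalIntegral.integral_eq_sub_of_hasDerivAt (fun z _ => hderiv z)
          (Continuous.intervalIntegrable (by fun_prop) _ _)).symm
    _ ≤ |∫ z in y..x, (f z ^ 2 + deriv f z ^ 2)| :=
        (le_abs_self _).trans (intervalIntegral.norm_integral_le_abs_of_norm_le
          (ae_of_all _ hYoung) (hsq.intervalIntegrable _ _))
    _ ≤ |∫ z in a..b, (f z ^ 2 + deriv f z ^ 2)| := by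
        refine intervalIntegral.abs_integral_mono_interval ?_
          (ae_of_all _ fun z => by positivity) (hsq.intervalIntegrable _ _)
        rw [uIoc_of_le hab]
        exact Ioc_subset_Ioc (le_min hy.1 hx.1) (max_le hy.2 hx.2)
    _ = L2norm f a b ^ 2 + L2norm (deriv f) a b ^ 2 := by
        rw [abs_of_nonneg (intervalIntegral.integral_nonneg hab fun z _ => by positivity),
          hadd, L2norm_sq f hab, L2norm_sq (deriv f) hab]

theorem abs_le_L2norm_add_L2norm_deriv (hf : ContDiff ℝ 1 f) (hab : a < b) {x : ℝ}
    (hx : x ∈ Icc a b) :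
    |f x| ≤ √(1 + 1 / (b - a)) * (L2norm f a b + L2norm (deriv f) a b) := by
  have hlen : 0 < b - a := sub_pos.2 hab
  have hP := L2norm_nonneg f hab.le
  have hQ := L2norm_nonneg (deriv f) hab.le
  set P := L2norm f a b
  set Q := L2norm (deriv f) a b
  have hmean : (b - a) * (f x ^ 2 - (P ^ 2 + Q ^ 2)) ≤ P ^ 2 :=
    calc (b - a) * (f x ^ 2 - (P ^ 2 + Q ^ 2))
        = ∫ _ in a..b, (f x ^ 2 - (P ^ 2 + Q ^ 2)) := by
          rw [intervalIntegral.integral_const, smul_eq_mul]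
      _ ≤ ∫ y in a..b, f y ^ 2 :=
          intervalIntegral.integral_mono_on hab.le intervalIntegrable_const
            ((hf.continuous.pow 2).intervalIntegrable _ _)
            fun y hy => by linarith [sq_sub_sq_le_L2norm_sq_add hf hx hy]
      _ = P ^ 2 := (L2norm_sq f hab.le).symm
  refine abs_le_of_sq_le_sq ?_ (by positivity)
  rw [mul_pow, Real.sq_sqrt (by positivity)]
  calc f x ^ 2 ≤ P ^ 2 / (b - a) + (P ^ 2 + Q ^ 2) := by
        rw [← sub_le_iff_le_add, le_div_iff₀' hlen]
        exact hmean
    _ ≤ (P + Q) ^ 2 / (b - a) + (P + Q) ^ 2 := by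
        gcongr <;> nlinarith
    _ = (1 + 1 / (b - a)) * (P + Q) ^ 2 := by ring

lemma Hnorm_nonneg (s : ℕ) (f : ℝ → ℝ) (hab : a ≤ b) : 0 ≤ Hnorm s f a b :=
  Finset.sum_nonneg fun _ _ => L2norm_nonneg _ hab

lemma Hnorm_le_of_abs_iteratedDeriv_le {s : ℕ} {B : ℝ} (hab : a ≤ b) (hB : 0 ≤ B)
    (hf : ∀ i ≤ s, ∀ x ∈ Icc a b, |iteratedDeriv i f x| ≤ B) :
    Hnorm s f a b ≤ (s + 1) * (√(b - a) * B) := by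
  refine (Finset.sum_le_card_nsmul _ _ _ fun i hi => L2norm_le_of_abs_le hab hB
    (hf i (Finset.mem_range_succ_iff.1 hi))).trans_eq ?_
  rw [Finset.card_range, nsmul_eq_mul, Nat.cast_succ]

lemma L2norm_iteratedDeriv_le_rhoQ {k c i : ℕ} (u : ℝ → ℝ → ℝ) {R : ℝ} (hR : 0 ≤ R) (hc : c < k)
    (hi : i ≤ 3 * (k - c)) :
    L2norm (iteratedDeriv i fun y => iteratedDeriv c (fun t => u t y) 0) 0 R ≤ rhoQ k u R :=
  calc L2norm (iteratedDeriv i fun y => iteratedDeriv c (fun t => u t y) 0) 0 R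
      ≤ Hnorm (3 * (k - c)) (fun y => iteratedDeriv c (fun t => u t y) 0) 0 R :=
        Finset.single_le_sum
          (f := fun i => L2norm (iteratedDeriv i fun y => iteratedDeriv c (fun t => u t y) 0) 0 R)
          (fun _ _ => L2norm_nonneg _ hR) (Finset.mem_range_succ_iff.2 hi)
    _ ≤ rhoQ k u R :=
        Finset.single_le_sum
          (f := fun c => Hnorm (3 * (k - c)) (fun y => iteratedDeriv c (fun t => u t y) 0) 0 R)
          (fun _ _ => Hnorm_nonneg _ _ hR) (Finset.mem_range.2 hc)

lemma norm_traceJet_le_rhoQ {k m j : ℕ} {u : ℝ → ℝ → ℝ}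
    (hu : ContDiff ℝ (3 * k : ℕ) (Function.uncurry u)) (hmj : 3 * m + j < 3 * k) {R : ℝ}
    (hR : 0 < R) {x : ℝ} (hx : x ∈ Icc 0 R) :
    ‖traceJet m j u x‖ ≤ √(1 + 1 / R) * (2 * rhoQ k u R) := by
  have hentry (i : Fin (j + 1)) (c : Fin (m + 1)) :
      ‖traceJet m j u x i c‖ ≤ √(1 + 1 / R) * (2 * rhoQ k u R) := by
    have hc := c.is_le
    have hi := i.is_le
    have hreg : ContDiff ℝ (1 + (i : ℕ)) fun y => iteratedDeriv c (fun t => u t y) 0 :=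
      contDiff_iteratedDeriv_fst c
        (hu.of_le (by exact_mod_cast (by omega : 1 + (i : ℕ) + c ≤ 3 * k))) 0
    have hC1 := hreg.iterate_deriv'
    rw [← iteratedDeriv_eq_iterate] at hC1
    rw [traceJet_apply (hu.of_le (by exact_mod_cast (by omega : j + m ≤ 3 * k)))]
    have hsobolev := abs_le_L2norm_add_L2norm_deriv hC1 hR hx
    rw [sub_zero, ← iteratedDeriv_succ] at hsobolev
    refine hsobolev.trans ?_
    rw [two_mul]
    gcongr <;> exact L2norm_iteratedDeriv_le_rhoQ u hR.le (by omega) (by omega)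
  have hbound := (norm_nonneg _).trans (hentry 0 0)
  exact (pi_norm_le_iff_of_nonneg hbound).2 fun i =>
    (pi_norm_le_iff_of_nonneg hbound).2 (hentry i)

lemma Hnorm_deriv_le_of_norm_traceJet_le {m s : ℕ} {w : ℝ → ℝ → ℝ}
    (hw : ContDiff ℝ ((s + 1 : ℕ) + m) (Function.uncurry w)) (hab : a ≤ b) {B : ℝ}
    (hB : ∀ x ∈ Icc a b, ‖traceJet m (s + 1) w x‖ ≤ B) :
    Hnorm s (fun x => deriv (fun y => iteratedDeriv m (fun t => w t y) 0) x) a b ≤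
      (s + 1) * (√(b - a) * B) := by
  have hB₀ : 0 ≤ B := (norm_nonneg _).trans (hB a (left_mem_Icc.2 hab))
  refine Hnorm_le_of_abs_iteratedDeriv_le hab hB₀ fun i hi x hx => ?_
  have hentry := traceJet_apply hw x ⟨i + 1, by omega⟩ (Fin.last m)
  rw [Fin.val_last, iteratedDeriv_succ'] at hentry
  rw [← hentry]
  exact (norm_le_pi_norm _ _).trans ((norm_le_pi_norm _ _).trans (hB x hx))

theorem exists_Hnorm_deriv_comp_sub_le {R : ℝ} (hR : 0 < R) {k m : ℕ} (hm : m < k) {g : ℝ → ℝ}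
    (hg : ContDiff ℝ (3 * k - 1 : ℕ) g) (ρ : ℝ) :
    ∃ K : ℝ, ∀ u v : ℝ → ℝ → ℝ, ContDiff ℝ (3 * k : ℕ) (Function.uncurry u) →
      ContDiff ℝ (3 * k : ℕ) (Function.uncurry v) → rhoQ k u R ≤ ρ → rhoQ k v R ≤ ρ →
      Hnorm (3 * (k - m - 1))
          (fun x => deriv (fun y => iteratedDeriv m (fun t => g (u t y) - g (v t y)) 0) x) 0 R ≤
        K * rhoQ k (fun t x => u t x - v t x) R := by
  set s := 3 * (k - m - 1)
  have hs : 3 * m + s + 3 = 3 * k := by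
    change 3 * m + 3 * (k - m - 1) + 3 = 3 * k
    omega
  set C := √(1 + 1 / R)
  have hgm : ContDiff ℝ (1 + (s + 1 : ℕ) + m) g :=
    hg.of_le (by exact_mod_cast (by omega : 1 + (s + 1) + m ≤ 3 * k - 1))
  obtain ⟨K, hK⟩ := exists_lipschitz_traceJet_comp m (s + 1) hgm (C * (2 * ρ))
  refine ⟨(s + 1) * (√R * (K * (C * 2))), fun u v hu hv hρu hρv => ?_⟩
  have hle : (((s + 1 : ℕ) : WithTop ℕ∞) + m) ≤ (3 * k : ℕ) := by
    exact_mod_cast (by omega : s + 1 + m ≤ 3 * k)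
  have hgm' : ContDiff ℝ ((s + 1 : ℕ) + m) g := hgm.of_le (by rw [add_assoc]; exact le_add_self)
  have hsob {w : ℝ → ℝ → ℝ} (hw : ContDiff ℝ (3 * k : ℕ) (Function.uncurry w)) {x : ℝ}
      (hx : x ∈ Icc 0 R) : ‖traceJet m (s + 1) w x‖ ≤ C * (2 * rhoQ k w R) :=
    norm_traceJet_le_rhoQ hw (by omega) hR hx
  refine (Hnorm_deriv_le_of_norm_traceJet_le
    ((hgm'.comp (hu.of_le hle)).sub (hgm'.comp (hv.of_le hle))) hR.le
    (B := K * (C * (2 * rhoQ k (fun t x => u t x - v t x) R))) fun x hx => ?_).trans_eq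
    (by rw [sub_zero]; ring)
  calc ‖traceJet m (s + 1) (fun t y => g (u t y) - g (v t y)) x‖
      ≤ K * ‖traceJet m (s + 1) (fun t y => u t y - v t y) x‖ :=
        hK u v (hu.of_le hle) (hv.of_le hle) x ((hsob hu hx).trans (by gcongr))
          ((hsob hv hx).trans (by gcongr))
    _ ≤ K * (C * (2 * rhoQ k (fun t x => u t x - v t x) R)) := by
        gcongr
        exact hsob (w := fun t x => u t x - v t x) (hu.sub hv) hx

end SobolevNorms

lemma exists_monotone_forall_natCeil_le {ι : Type*} [Finite ι] (K : ℕ → ι → ℝ) :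
    ∃ lam : ℝ → ℝ, Monotone lam ∧ ∀ ρ i, K ⌈ρ⌉₊ i ≤ lam ρ := by
  have := Fintype.ofFinite ι
  refine ⟨fun ρ => partialSups (fun n => ∑ i, |K n i|) ⌈ρ⌉₊,
    (partialSups _).monotone.comp Nat.ceil_mono, fun ρ i => ?_⟩
  calc K ⌈ρ⌉₊ i ≤ |K ⌈ρ⌉₊ i| := le_abs_self _
    _ ≤ ∑ i, |K ⌈ρ⌉₊ i| :=
        Finset.single_le_sum (f := fun i => |K ⌈ρ⌉₊ i|) (fun _ _ => abs_nonneg _)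
          (Finset.mem_univ i)
    _ ≤ partialSups (fun n => ∑ i, |K n i|) ⌈ρ⌉₊ := le_partialSups (fun n => ∑ i, |K n i|) _

theorem trace_nonlinear_estimate_general {R : ℝ} (hR : 0 < R) (k : ℕ) {g : ℝ → ℝ}
    (hg : ContDiff ℝ (3 * k - 1 : ℕ) g) :
    ∃ lam : ℝ → ℝ, Monotone lam ∧ ∀ (ρ : ℝ) (u v : ℝ → ℝ → ℝ),
      ContDiff ℝ (3 * k : ℕ) (Function.uncurry u) →
      ContDiff ℝ (3 * k : ℕ) (Function.uncurry v) →
      rhoQ k u R ≤ ρ → rhoQ k v R ≤ ρ → ∀ m < k,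
        Hnorm (3 * (k - m - 1))
            (fun x => deriv (fun y => iteratedDeriv m (fun t => g (u t y) - g (v t y)) 0) x) 0 R ≤
          lam ρ * rhoQ k (fun t x => u t x - v t x) R := by
  choose K hK using fun (n : ℕ) (m : Fin k) => exists_Hnorm_deriv_comp_sub_le hR m.is_lt hg n
  obtain ⟨lam, hlam, hKlam⟩ := exists_monotone_forall_natCeil_le K
  refine ⟨lam, hlam, fun ρ u v hu hv hρu hρv m hm => ?_⟩
  have hceil : ρ ≤ ⌈ρ⌉₊ := Nat.le_ceil ρ
  refine (hK ⌈ρ⌉₊ ⟨m, hm⟩ u v hu hv (hρu.trans hceil) (hρv.trans hceil)).trans ?_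
  gcongr
  · exact Finset.sum_nonneg fun _ _ => Hnorm_nonneg _ _ hR.le
  · exact hKlam ρ ⟨m, hm⟩

/-- Lemma 2.3: for `g ∈ C^{3k−1}` with `g(0)=g'(0)=0` there is a
nondecreasing `λ` such that whenever `ρ(u), ρ(v) ≤ ρ`,
`‖∂_t^m (g(u) − g(v))_x|_{t=0}‖_{H^{3(k−m−1)}(I)} ≤ λ(ρ)·ρ(u − v)` for `m ≤ k−1`. -/
theorem trace_nonlinear_estimate (R T : ℝ) (hR : 0 < R) (hT : 0 < T)
    (k : ℕ) (hk : 1 ≤ k)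
    (g : ℝ → ℝ) (hg : ContDiff ℝ (3 * k - 1) g)
    (hg0 : g 0 = 0) (hg'0 : deriv g 0 = 0) :
    ∃ lam : ℝ → ℝ, Monotone lam ∧
      ∀ ρ : ℝ, 0 < ρ → ∀ u v : ℝ → ℝ → ℝ,
        ContDiff ℝ (⊤ : ℕ∞) (fun p : ℝ × ℝ => u p.1 p.2) →
        ContDiff ℝ (⊤ : ℕ∞) (fun p : ℝ × ℝ => v p.1 p.2) →
        rhoQ k u R ≤ ρ → rhoQ k v R ≤ ρ →
        ∀ m : ℕ, m ≤ k - 1 →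
          Hnorm (3 * (k - m - 1))
              (fun x => deriv
                (fun y => iteratedDeriv m (fun t => g (u t y) - g (v t y)) 0) x) 0 R
            ≤ lam ρ * rhoQ k (fun t x => u t x - v t x) R := by
  obtain ⟨lam, hlam, hbound⟩ := trace_nonlinear_estimate_general hR k hg
  exact ⟨lam, hlam, fun ρ _ u v hu hv hρu hρv m hm =>
    hbound ρ u v (contDiff_infty.1 hu _) (contDiff_infty.1 hv _) hρu hρv m (by omega)⟩
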